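/- In the gluing setup, the function d = p ∪ ⋃𝔉 is a graph pseudometric, i.e., d(xy) = d̂(x,y) for every edge xy ∈ E_d. -/

import Mathlib

open scoped Classical

universe u

namespace GraphMetricPaper

variable {X : Type u}

/-- The vertex set `V = ⋃ E` of a graph given by an adjacency relation `E`. -/
def Vtx (E : X → X → Prop) : Set X := {x | ∃ y, E x y}

/-- Two points are joined by a walk in the graph `E`. -/
def Joined (E : X → X → Prop) (x y : X) : Prop :=
  ∃ (n : ℕ) (c : ℕ → X), c 0 = x ∧ c n = y ∧ ∀ i, i < n → E (c i) (c (i + 1))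

/-- The set of weights of walks from `x` to `y`. -/
def walkSums (E : X → X → Prop) (d : X → X → ℝ) (x y : X) : Set ℝ :=
  {s | ∃ (n : ℕ) (c : ℕ → X), c 0 = x ∧ c n = y ∧ (∀ i, i < n → E (c i) (c (i + 1))) ∧
    s = ∑ i ∈ Finset.range n, d (c i) (c (i + 1))}

/-- The shortest-path pseudometric `d̂` determined by a weight function `d` on a graph `E`. -/
noncomputable def hatd (E : X → X → Prop) (d : X → X → ℝ) (x y : X) : ℝ :=
  sInf (walkSums E d x y)

/-- The function `ď` bounding the possible extensions of `d` from below: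
`ď(x,y) = sup_{ab ∈ E} max {0, d(ab) - d̂(a,x) - d̂(y,b)}`. -/
noncomputable def checkd (E : X → X → Prop) (d : X → X → ℝ) (x y : X) : ℝ :=
  sSup ({0} ∪ {r | ∃ a b, E a b ∧ r = d a b - hatd E d a x - hatd E d y b})

/-- The pseudometric `d̈` on doubletons:
`d̈(xy,uv) = min {d̂(x,u) + d̂(y,v), d̂(x,v) + d̂(y,u)}`. -/
noncomputable def ddot (E : X → X → Prop) (d : X → X → ℝ) (x y u v : X) : ℝ :=
  min (hatd E d x u + hatd E d y v) (hatd E d x v + hatd E d y u)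

/-- `d` is a graph pseudometric with edge relation `E`:  `E` is a (symmetric, irreflexive)
connected graph, `d` is a nonnegative symmetric weight on the edges, and `d = d̂` on edges. -/
structure IsGraphPseudometric (E : X → X → Prop) (d : X → X → ℝ) : Prop where
  symm : ∀ ⦃a b⦄, E a b → E b a
  irrefl : ∀ a, ¬ E a a
  wt_symm : ∀ ⦃a b⦄, E a b → d a b = d b a
  nonneg : ∀ ⦃a b⦄, E a b → 0 ≤ d a b
  connected : ∀ x ∈ Vtx E, ∀ y ∈ Vtx E, Joined E x y
  edge_eq : ∀ ⦃a b⦄, E a b → d a b = hatd E d a b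

/-- A graph metric is a graph pseudometric with strictly positive weights. -/
def IsGraphMetric (E : X → X → Prop) (d : X → X → ℝ) : Prop :=
  IsGraphPseudometric E d ∧ ∀ ⦃a b⦄, E a b → 0 < d a b

/-- A floppy graph pseudometric: `ď(x,y) < d̂(x,y)` for every `xy ∈ [V]² \ E`. -/
def FloppyPseudometric (E : X → X → Prop) (d : X → X → ℝ) : Prop :=
  IsGraphPseudometric E d ∧
    ∀ x ∈ Vtx E, ∀ y ∈ Vtx E, x ≠ y → ¬ E x y → checkd E d x y < hatd E d x y

/-- A floppy graph metric: `ď(x,y) < d̂(x,y)` for every `xy ∈ [V]² \ E`. -/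
def FloppyMetric (E : X → X → Prop) (d : X → X → ℝ) : Prop :=
  IsGraphMetric E d ∧
    ∀ x ∈ Vtx E, ∀ y ∈ Vtx E, x ≠ y → ¬ E x y → checkd E d x y < hatd E d x y

/-- The edge relation of the one-step extension `E ∪ {xy}`. -/
def extEdge (E : X → X → Prop) (x y : X) : X → X → Prop :=
  fun a b => E a b ∨ (a = x ∧ b = y) ∨ (a = y ∧ b = x)

/-- The weight function of the one-step extension `d ∪ {⟨xy, r⟩}`. -/
noncomputable def extWt (d : X → X → ℝ) (x y : X) (r : ℝ) : X → X → ℝ :=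
  fun a b => if (a = x ∧ b = y) ∨ (a = y ∧ b = x) then r else d a b

/-- The set `[V]² \ E` of unordered pairs of distinct vertices that are not edges. -/
def nonEdgePairs (E : X → X → Prop) : Set (Sym2 X) :=
  {e | ∃ a b : X, e = s(a, b) ∧ a ≠ b ∧ a ∈ Vtx E ∧ b ∈ Vtx E ∧ ¬ E a b}

/-- A set of (unordered) weighted pairs, presented as a relation `R`, is a full metric
on `V`: it is symmetric, its domain is exactly `[V]²`, it is single-valued, positive,
and satisfies the triangle inequality. -/
def IsFullMetricRel (V : Set X) (R : X → X → ℝ → Prop) : Prop :=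
  (∀ a b r, R a b r → R b a r) ∧
  (∀ a b r, R a b r → a ∈ V ∧ b ∈ V ∧ a ≠ b) ∧
  (∀ a b, a ∈ V → b ∈ V → a ≠ b → ∃ r, R a b r) ∧
  (∀ a b r s, R a b r → R a b s → r = s) ∧
  (∀ a b r, R a b r → 0 < r) ∧
  (∀ a b c r s t, R a b r → R b c s → R a c t → t ≤ r + s)

/-- A weight function `D` on `[V]²` is a full metric on `V`. -/
def IsFullMetricOn (V : Set X) (D : X → X → ℝ) : Prop :=
  (∀ a b, a ∈ V → b ∈ V → a ≠ b → D a b = D b a) ∧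
  (∀ a b, a ∈ V → b ∈ V → a ≠ b → 0 < D a b) ∧
  (∀ a b c, a ∈ V → b ∈ V → c ∈ V → a ≠ b → b ≠ c → a ≠ c → D a c ≤ D a b + D b c)

/-- Player I has a winning strategy in the metric-extending game `Game_d(lam, Fam)`:
there are functions `S1, S2` choosing, for each inning `β < lam` and each sequence of
previous answers of player II, a legal doubleton in `[V]²` and a set from `Fam`, such that
for every play of player II respecting the strategy, the resulting relation
`d ∪ {⟨x_α y_α, r_α⟩ : α < lam}` is a full metric on `V`. -/
def WinningStratI (V : Set X) (E : X → X → Prop) (d : X → X → ℝ)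
    (lam : Ordinal.{u}) (Fam : Set (Set ℝ)) : Prop :=
  ∃ (S1 : ∀ β : Ordinal.{u}, β < lam → (∀ α : Ordinal.{u}, α < β → ℝ) → X × X)
    (S2 : ∀ β : Ordinal.{u}, β < lam → (∀ α : Ordinal.{u}, α < β → ℝ) → Set ℝ),
    (∀ β hβ s, S2 β hβ s ∈ Fam) ∧
    (∀ β hβ s, (S1 β hβ s).1 ∈ V ∧ (S1 β hβ s).2 ∈ V ∧ (S1 β hβ s).1 ≠ (S1 β hβ s).2) ∧
    (∀ s : ∀ α : Ordinal.{u}, α < lam → ℝ,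
      (∀ α (hα : α < lam), s α hα ∈ S2 α hα (fun γ hγ => s γ (hγ.trans hα))) →
      IsFullMetricRel V (fun a b r =>
        (E a b ∧ r = d a b) ∨
        ∃ α, ∃ hα : α < lam,
          ((a = (S1 α hα (fun γ hγ => s γ (hγ.trans hα))).1 ∧
            b = (S1 α hα (fun γ hγ => s γ (hγ.trans hα))).2) ∨
           (a = (S1 α hα (fun γ hγ => s γ (hγ.trans hα))).2 ∧
            b = (S1 α hα (fun γ hγ => s γ (hγ.trans hα))).1)) ∧
          r = s α hα))

/-- Player II has a winning strategy in the metric-extending game `Game_d(lam, Fam)`: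
there is a function `T` assigning to each inning `β < lam` and each sequence of moves of
player I (of length `β + 1`) an answer in the set component of the last move, such that
for every legal play of player I, the resulting relation is not a full metric on `V`. -/
def WinningStratII (V : Set X) (E : X → X → Prop) (d : X → X → ℝ)
    (lam : Ordinal.{u}) (Fam : Set (Set ℝ)) : Prop :=
  ∃ T : ∀ β : Ordinal.{u}, β < lam → (∀ α : Ordinal.{u}, α ≤ β → (X × X) × Set ℝ) → ℝ,
    (∀ β hβ p, (p β le_rfl).2 ∈ Fam → T β hβ p ∈ (p β le_rfl).2) ∧
    (∀ p : ∀ α : Ordinal.{u}, α < lam → (X × X) × Set ℝ,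
      (∀ α hα, (p α hα).1.1 ∈ V ∧ (p α hα).1.2 ∈ V ∧ (p α hα).1.1 ≠ (p α hα).1.2 ∧
        (p α hα).2 ∈ Fam) →
      ¬ IsFullMetricRel V (fun a b r =>
        (E a b ∧ r = d a b) ∨
        ∃ α, ∃ hα : α < lam,
          ((a = (p α hα).1.1 ∧ b = (p α hα).1.2) ∨
           (a = (p α hα).1.2 ∧ b = (p α hα).1.1)) ∧
          r = T α hα (fun γ hγ => p γ (lt_of_le_of_lt hγ hα))))

/-- The edge relation of the glued graph `E_d = E_p ∪ ⋃_{f ∈ F} E_f`. -/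
def gluedEdge (Ep : X → X → Prop) (F : Set ((X → X → Prop) × (X → X → ℝ))) :
    X → X → Prop :=
  fun a b => Ep a b ∨ ∃ f ∈ F, f.1 a b

/-- `Λ(v; B) = inf {d̂(a,v) + d̂(v,b) - d̂(a,b) : a, b ∈ B}`. -/
noncomputable def Lam (E : X → X → Prop) (d : X → X → ℝ) (v : X) (B : Set X) : ℝ :=
  sInf {r | ∃ a ∈ B, ∃ b ∈ B, r = hatd E d a v + hatd E d v b - hatd E d a b}

/-- The gluing setup: a graph pseudometric `p = (Ep, wp)` and a family `F` of graph
pseudometrics such that each member meets `V_p`, agrees with `p̂` on the intersection of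
the vertex sets, and distinct members only meet inside `V_p`; `wd` is the glued weight
function `d = p ∪ ⋃ F` on `E_d = E_p ∪ ⋃_{f ∈ F} E_f`. -/
structure GluingSetup (Ep : X → X → Prop) (wp : X → X → ℝ)
    (F : Set ((X → X → Prop) × (X → X → ℝ))) (wd : X → X → ℝ) : Prop where
  hp : IsGraphPseudometric Ep wp
  hF : ∀ f ∈ F, IsGraphPseudometric f.1 f.2
  meet : ∀ f ∈ F, (Vtx f.1 ∩ Vtx Ep).Nonempty
  agree : ∀ f ∈ F, ∀ x ∈ Vtx f.1 ∩ Vtx Ep, ∀ y ∈ Vtx f.1 ∩ Vtx Ep, x ≠ y →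
    hatd f.1 f.2 x y = hatd Ep wp x y
  inter_sub : ∀ f ∈ F, ∀ g ∈ F, f ≠ g → Vtx f.1 ∩ Vtx g.1 ⊆ Vtx Ep
  wd_p : ∀ ⦃a b⦄, Ep a b → wd a b = wp a b
  wd_F : ∀ f ∈ F, ∀ ⦃a b⦄, f.1 a b → wd a b = f.2 a b

/-!
A walk weighs at least as much as a feasible potential (a function increasing by at most the
weight of each edge) gains along it, so `d a b = d̂ a b` holds as soon as some potential gains
exactly `d a b` along the edge `a b`. For an edge `a b` of a piece `f` (that is, of `p` or of a
member of `𝔉`), the function `f̂ a` is such a potential on `f`. Since all pieces agree with `p̂`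
on their intersections with `V_p`, McShane's theorem extends the restriction of `f̂ a` to
`V_f ∩ V_p` to a `1`-Lipschitz function on `V_p`, and then extends that function over every
other piece. Distinct pieces only meet inside `V_p`, so these extensions combine into one
potential on the glued graph.
-/

section Walks

variable {E : X → X → Prop} {d : X → X → ℝ} {x y z : X} {s t : ℝ}

theorem zero_mem_walkSums : (0 : ℝ) ∈ walkSums E d x x :=
  ⟨0, fun _ => x, rfl, rfl, by simp, by simp⟩

theorem add_edge_mem_walkSums (hs : s ∈ walkSums E d x y) (hyz : E y z) :
    s + d y z ∈ walkSums E d x z := by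
  obtain ⟨n, c, h0, rfl, hc, rfl⟩ := hs
  have ne_and_ne_succ {i : ℕ} (hi : i < n) : i ≠ n ∧ i ≠ n + 1 := by omega
  refine ⟨n + 1, Function.update c (n + 1) z, by simpa using h0, by simp, fun i hi => ?_, ?_⟩
  · rcases Nat.lt_succ_iff_lt_or_eq.mp hi with hin | rfl
    · simpa [ne_and_ne_succ hin] using hc i hin
    · simpa using hyz
  · rw [Finset.sum_range_succ]
    congr 1
    · refine Finset.sum_congr rfl fun i hi => ?_
      simp [ne_and_ne_succ (Finset.mem_range.mp hi)]
    · simp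

@[elab_as_elim]
theorem walkSums_induction {motive : ∀ y s, s ∈ walkSums E d x y → Prop}
    (zero : motive x 0 zero_mem_walkSums)
    (add_edge : ∀ ⦃y z s⦄ (hs : s ∈ walkSums E d x y) (hyz : E y z),
      motive y s hs → motive z (s + d y z) (add_edge_mem_walkSums hs hyz))
    (hs : s ∈ walkSums E d x y) : motive y s hs := by
  obtain ⟨n, c, rfl, rfl, hc, rfl⟩ := hs
  induction n with
  | zero => simpa using zero
  | succ n ih =>
    have hc' : ∀ i < n, E (c i) (c (i + 1)) := fun i hi => hc i (hi.trans n.lt_succ_self)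
    simpa only [Finset.sum_range_succ] using
      add_edge ⟨n, c, rfl, rfl, hc', rfl⟩ (hc n n.lt_succ_self) (ih hc')

theorem edge_mem_walkSums (hxy : E x y) : d x y ∈ walkSums E d x y := by
  simpa using add_edge_mem_walkSums (d := d) zero_mem_walkSums hxy

theorem add_mem_walkSums (hs : s ∈ walkSums E d x y) (ht : t ∈ walkSums E d y z) :
    s + t ∈ walkSums E d x z := by
  induction ht using walkSums_induction with
  | zero => simpa using hs
  | add_edge _ huv ih =>
    rw [← add_assoc]
    exact add_edge_mem_walkSums ih huv

theorem mem_walkSums_symm (hE : ∀ ⦃a b⦄, E a b → E b a) (hd : ∀ ⦃a b⦄, E a b → d a b = d b a)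
    (hs : s ∈ walkSums E d x y) : s ∈ walkSums E d y x := by
  induction hs using walkSums_induction with
  | zero => exact zero_mem_walkSums
  | add_edge _ huv ih =>
    rw [add_comm, hd huv]
    exact add_mem_walkSums (edge_mem_walkSums (hE huv)) ih

theorem nonneg_of_mem_walkSums (hd : ∀ ⦃a b⦄, E a b → 0 ≤ d a b)
    (hs : s ∈ walkSums E d x y) : 0 ≤ s := by
  obtain ⟨n, c, -, -, hc, rfl⟩ := hs
  exact Finset.sum_nonneg fun i hi => hd (hc i (Finset.mem_range.mp hi))

theorem joined_iff_walkSums_nonempty (d : X → X → ℝ) :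
    Joined E x y ↔ (walkSums E d x y).Nonempty :=
  ⟨fun ⟨n, c, h0, hn, hc⟩ => ⟨_, n, c, h0, hn, hc, rfl⟩,
    fun ⟨_, n, c, h0, hn, hc, _⟩ => ⟨n, c, h0, hn, hc⟩⟩

theorem Joined.trans (hxy : Joined E x y) (hyz : Joined E y z) : Joined E x z := by
  obtain ⟨s, hs⟩ := (joined_iff_walkSums_nonempty 0).mp hxy
  obtain ⟨t, ht⟩ := (joined_iff_walkSums_nonempty 0).mp hyz
  exact (joined_iff_walkSums_nonempty 0).mpr ⟨s + t, add_mem_walkSums hs ht⟩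

theorem Joined.mono {E' : X → X → Prop} (hE : E ≤ E') (hxy : Joined E x y) : Joined E' x y :=
  let ⟨n, c, h0, hn, hc⟩ := hxy
  ⟨n, c, h0, hn, fun i hi => hE _ _ (hc i hi)⟩

theorem joined_of_edge (hxy : E x y) : Joined E x y :=
  (joined_iff_walkSums_nonempty 0).mpr ⟨_, edge_mem_walkSums hxy⟩

end Walks

section ShortestPath

variable {E : X → X → Prop} {d : X → X → ℝ} {x y z : X} {s : ℝ}

theorem hatd_le_of_mem_walkSums (hd : ∀ ⦃a b⦄, E a b → 0 ≤ d a b)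
    (hs : s ∈ walkSums E d x y) : hatd E d x y ≤ s :=
  csInf_le ⟨0, fun _ => nonneg_of_mem_walkSums hd⟩ hs

theorem hatd_le_of_edge (hd : ∀ ⦃a b⦄, E a b → 0 ≤ d a b) (hxy : E x y) :
    hatd E d x y ≤ d x y :=
  hatd_le_of_mem_walkSums hd (edge_mem_walkSums hxy)

theorem hatd_self (hd : ∀ ⦃a b⦄, E a b → 0 ≤ d a b) : hatd E d x x = 0 :=
  le_antisymm (hatd_le_of_mem_walkSums hd zero_mem_walkSums)
    (Real.sInf_nonneg fun _ => nonneg_of_mem_walkSums hd)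

theorem hatd_comm (hE : ∀ ⦃a b⦄, E a b → E b a) (hd : ∀ ⦃a b⦄, E a b → d a b = d b a) :
    hatd E d x y = hatd E d y x :=
  congrArg sInf <| Set.Subset.antisymm (fun _ => mem_walkSums_symm hE hd)
    (fun _ => mem_walkSums_symm hE hd)

theorem hatd_triangle (hd : ∀ ⦃a b⦄, E a b → 0 ≤ d a b) (hxy : Joined E x y)
    (hyz : Joined E y z) : hatd E d x z ≤ hatd E d x y + hatd E d y z := by
  rw [← sub_le_iff_le_add]
  refine le_csInf ((joined_iff_walkSums_nonempty d).mp hxy) fun s hs => ?_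
  rw [sub_le_comm]
  refine le_csInf ((joined_iff_walkSums_nonempty d).mp hyz) fun t ht => ?_
  rw [sub_le_iff_le_add']
  exact hatd_le_of_mem_walkSums hd (add_mem_walkSums hs ht)

end ShortestPath

/-- A feasible potential of the weighted graph `(E, d)`, as in linear programming duality for
shortest paths. It is a function on all of `X`, but only its values on `V` are constrained. When
`E` and `d` are symmetric, the one-sided inequality says that `φ` is `1`-Lipschitz along edges. -/
def IsPotential (E : X → X → Prop) (d : X → X → ℝ) (φ : X → ℝ) : Prop :=
  ∀ ⦃a b⦄, E a b → φ b ≤ φ a + d a b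

namespace IsPotential

variable {E : X → X → Prop} {d : X → X → ℝ} {φ : X → ℝ} {x y : X} {s : ℝ}

theorem le_add_of_mem_walkSums (hφ : IsPotential E d φ) (hs : s ∈ walkSums E d x y) :
    φ y ≤ φ x + s := by
  induction hs using walkSums_induction with
  | zero => simp
  | add_edge _ huv ih => linarith [hφ huv]

theorem le_add_hatd (hφ : IsPotential E d φ) (hxy : Joined E x y) :
    φ y ≤ φ x + hatd E d x y := by
  rw [← sub_le_iff_le_add']
  exact le_csInf ((joined_iff_walkSums_nonempty d).mp hxy) fun _ hs =>
    sub_le_iff_le_add'.mpr (hφ.le_add_of_mem_walkSums hs)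

theorem eq_hatd_of_edge (hφ : IsPotential E d φ) (hd : ∀ ⦃a b⦄, E a b → 0 ≤ d a b) (hxy : E x y)
    (htight : φ y = φ x + d x y) : d x y = hatd E d x y := by
  refine le_antisymm ?_ (hatd_le_of_edge hd hxy)
  linarith [hφ.le_add_hatd (joined_of_edge hxy)]

end IsPotential

namespace IsGraphPseudometric

variable {E : X → X → Prop} {d : X → X → ℝ}

/-- The shortest-path pseudometric `d̂` of a graph pseudometric `d`, as a pseudometric space
structure on its vertex set. -/
noncomputable abbrev pseudoMetricSpace (hE : IsGraphPseudometric E d) :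
    PseudoMetricSpace (Vtx E) where
  dist x y := hatd E d x y
  dist_self _ := hatd_self hE.nonneg
  dist_comm _ _ := hatd_comm hE.symm hE.wt_symm
  dist_triangle x y z := hatd_triangle hE.nonneg (hE.connected x x.2 y y.2)
    (hE.connected y y.2 z z.2)

theorem isPotential_hatd (hE : IsGraphPseudometric E d) {a : X} (ha : a ∈ Vtx E) :
    IsPotential E d (hatd E d a) := by
  intro x y hxy
  calc hatd E d a y ≤ hatd E d a x + hatd E d x y :=
        hatd_triangle hE.nonneg (hE.connected a ha x ⟨y, hxy⟩) (joined_of_edge hxy)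
    _ = hatd E d a x + d x y := by rw [hE.edge_eq hxy]

theorem exists_isPotential_eqOn (hE : IsGraphPseudometric E d) {S : Set X} (hS : S ⊆ Vtx E)
    {φ : X → ℝ} (hφ : ∀ x ∈ S, ∀ y ∈ S, φ y ≤ φ x + hatd E d x y) :
    ∃ ψ, IsPotential E d ψ ∧ Set.EqOn ψ φ S := by
  let := hE.pseudoMetricSpace
  have hLip : LipschitzOnWith 1 (fun x : Vtx E => φ x) (Subtype.val ⁻¹' S) :=
    LipschitzOnWith.of_le_add fun x hx y hy => by
      rw [dist_comm]
      exact hφ y hy x hx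
  obtain ⟨g, hg, hφg⟩ := hLip.extend_real
  have extend_apply (x : Vtx E) : Function.extend Subtype.val g 0 (x : X) = g x :=
    Subtype.val_injective.extend_apply g 0 x
  refine ⟨Function.extend Subtype.val g 0, fun a b hab => ?_, fun x hx => ?_⟩
  · let a' : Vtx E := ⟨a, b, hab⟩
    let b' : Vtx E := ⟨b, a, hE.symm hab⟩
    rw [extend_apply a', extend_apply b']
    calc g b' ≤ g a' + dist b' a' := by
          simpa only [NNReal.coe_one, one_mul] using hg.le_add_mul b' a'
      _ = g a' + hatd E d a b := by rw [dist_comm]; rfl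
      _ ≤ g a' + d a b := by grw [hatd_le_of_edge hE.nonneg hab]
  · rw [extend_apply ⟨x, hS hx⟩]
    exact (hφg hx).symm

end IsGraphPseudometric

section GluedGraph

variable {Ep : X → X → Prop} {wp : X → X → ℝ} {F : Set ((X → X → Prop) × (X → X → ℝ))}
  {f : (X → X → Prop) × (X → X → ℝ)} {a b : X}

theorem gluedEdge_iff (wp : X → X → ℝ) :
    gluedEdge Ep F a b ↔ ∃ f ∈ insert (Ep, wp) F, f.1 a b := by
  simp [gluedEdge]

theorem le_gluedEdge (hf : f ∈ insert (Ep, wp) F) : f.1 ≤ gluedEdge Ep F :=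
  fun _ _ hab => (gluedEdge_iff wp).mpr ⟨f, hf, hab⟩

end GluedGraph

namespace GluingSetup

variable {Ep : X → X → Prop} {wp : X → X → ℝ} {F : Set ((X → X → Prop) × (X → X → ℝ))}
  {wd : X → X → ℝ} {f g : (X → X → Prop) × (X → X → ℝ)} {a b x y : X}

theorem isGraphPseudometric (hs : GluingSetup Ep wp F wd) (hf : f ∈ insert (Ep, wp) F) :
    IsGraphPseudometric f.1 f.2 := by
  rcases hf with rfl | hf
  · exact hs.hp
  · exact hs.hF f hf

theorem wd_eq (hs : GluingSetup Ep wp F wd) (hf : f ∈ insert (Ep, wp) F) (hab : f.1 a b) :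
    wd a b = f.2 a b := by
  rcases hf with rfl | hf
  · exact hs.wd_p hab
  · exact hs.wd_F f hf hab

theorem inter_subset (hs : GluingSetup Ep wp F wd) (hf : f ∈ insert (Ep, wp) F)
    (hg : g ∈ insert (Ep, wp) F) (hfg : f ≠ g) : Vtx f.1 ∩ Vtx g.1 ⊆ Vtx Ep := by
  rcases hf with rfl | hf
  · exact Set.inter_subset_left
  · rcases hg with rfl | hg
    · exact Set.inter_subset_right
    · exact hs.inter_sub f hf g hg hfg

theorem hatd_eq (hs : GluingSetup Ep wp F wd) (hf : f ∈ insert (Ep, wp) F)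
    (hx : x ∈ Vtx f.1 ∩ Vtx Ep) (hy : y ∈ Vtx f.1 ∩ Vtx Ep) :
    hatd f.1 f.2 x y = hatd Ep wp x y := by
  rcases hf with rfl | hf
  · rfl
  · rcases eq_or_ne x y with rfl | hxy
    · rw [hatd_self (hs.hF f hf).nonneg, hatd_self hs.hp.nonneg]
    · exact hs.agree f hf x hx y hy hxy

theorem exists_isPotential_of_eqOn_base (hs : GluingSetup Ep wp F wd) {φ : X → ℝ}
    {ψ : (X → X → Prop) × (X → X → ℝ) → X → ℝ}
    (hψ : ∀ f ∈ insert (Ep, wp) F, IsPotential f.1 f.2 (ψ f))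
    (hψφ : ∀ f ∈ insert (Ep, wp) F, Set.EqOn (ψ f) φ (Vtx f.1 ∩ Vtx Ep)) :
    ∃ Φ, IsPotential (gluedEdge Ep F) wd Φ ∧
      ∀ f ∈ insert (Ep, wp) F, Set.EqOn Φ (ψ f) (Vtx f.1) := by
  have consistent : ∀ f ∈ insert (Ep, wp) F, ∀ g ∈ insert (Ep, wp) F,
      Set.EqOn (ψ f) (ψ g) (Vtx f.1 ∩ Vtx g.1) := by
    intro f hf g hg x hx
    rcases eq_or_ne f g with rfl | hfg
    · rfl
    · have hxp := hs.inter_subset hf hg hfg hx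
      rw [hψφ f hf ⟨hx.1, hxp⟩, hψφ g hg ⟨hx.2, hxp⟩]
  have exists_value : ∀ x, ∃ r, ∀ f ∈ insert (Ep, wp) F, x ∈ Vtx f.1 → r = ψ f x := by
    intro x
    by_cases hx : ∃ f ∈ insert (Ep, wp) F, x ∈ Vtx f.1
    · obtain ⟨f, hf, hxf⟩ := hx
      exact ⟨ψ f x, fun g hg hxg => consistent f hf g hg ⟨hxf, hxg⟩⟩
    · exact ⟨0, fun f hf hxf => absurd ⟨f, hf, hxf⟩ hx⟩
  choose Φ hΦ using exists_value
  refine ⟨Φ, fun a b hab => ?_, fun f hf x hx => hΦ x f hf hx⟩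
  obtain ⟨f, hf, hab⟩ := (gluedEdge_iff wp).mp hab
  rw [hΦ a f hf ⟨b, hab⟩, hΦ b f hf ⟨a, (hs.isGraphPseudometric hf).symm hab⟩, hs.wd_eq hf hab]
  exact hψ f hf hab

theorem exists_isPotential_eqOn_base (hs : GluingSetup Ep wp F wd)
    (hf : f ∈ insert (Ep, wp) F) {φ : X → ℝ} (hφ : IsPotential f.1 f.2 φ) :
    ∃ ψ, IsPotential Ep wp ψ ∧ Set.EqOn ψ φ (Vtx f.1 ∩ Vtx Ep) := by
  refine hs.hp.exists_isPotential_eqOn Set.inter_subset_right fun x hx y hy => ?_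
  rw [← hs.hatd_eq hf hx hy]
  exact hφ.le_add_hatd ((hs.isGraphPseudometric hf).connected x hx.1 y hy.1)

theorem exists_isPotential_eqOn_piece (hs : GluingSetup Ep wp F wd)
    (hf : f ∈ insert (Ep, wp) F) {φ : X → ℝ} (hφ : IsPotential Ep wp φ) :
    ∃ ψ, IsPotential f.1 f.2 ψ ∧ Set.EqOn ψ φ (Vtx f.1 ∩ Vtx Ep) := by
  refine (hs.isGraphPseudometric hf).exists_isPotential_eqOn Set.inter_subset_left
    fun x hx y hy => ?_
  rw [hs.hatd_eq hf hx hy]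
  exact hφ.le_add_hatd (hs.hp.connected x hx.2 y hy.2)

theorem exists_isPotential_glued_eqOn (hs : GluingSetup Ep wp F wd)
    (hf : f ∈ insert (Ep, wp) F) {φ : X → ℝ} (hφ : IsPotential f.1 f.2 φ) :
    ∃ Φ, IsPotential (gluedEdge Ep F) wd Φ ∧ Set.EqOn Φ φ (Vtx f.1) := by
  obtain ⟨φp, hφp, hφpφ⟩ := hs.exists_isPotential_eqOn_base hf hφ
  choose! ψ hψ hψφp using fun g hg => hs.exists_isPotential_eqOn_piece (f := g) hg hφp
  have update_isPotential : ∀ g ∈ insert (Ep, wp) F,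
      IsPotential g.1 g.2 (Function.update ψ f φ g) := by
    intro g hg
    rcases eq_or_ne g f with rfl | hgf
    · rwa [Function.update_self]
    · rw [Function.update_of_ne hgf]
      exact hψ g hg
  have update_eqOn : ∀ g ∈ insert (Ep, wp) F,
      Set.EqOn (Function.update ψ f φ g) φp (Vtx g.1 ∩ Vtx Ep) := by
    intro g hg
    rcases eq_or_ne g f with rfl | hgf
    · rw [Function.update_self]
      exact hφpφ.symm
    · rw [Function.update_of_ne hgf]
      exact hψφp g hg
  obtain ⟨Φ, hΦ, hΦψ⟩ := hs.exists_isPotential_of_eqOn_base update_isPotential update_eqOn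
  have hΦf := hΦψ f hf
  rw [Function.update_self] at hΦf
  exact ⟨Φ, hΦ, hΦf⟩

theorem wd_nonneg (hs : GluingSetup Ep wp F wd) (hab : gluedEdge Ep F a b) :
    0 ≤ wd a b := by
  obtain ⟨f, hf, hab⟩ := (gluedEdge_iff wp).mp hab
  rw [hs.wd_eq hf hab]
  exact (hs.isGraphPseudometric hf).nonneg hab

theorem wd_eq_hatd (hs : GluingSetup Ep wp F wd) (hab : gluedEdge Ep F a b) :
    wd a b = hatd (gluedEdge Ep F) wd a b := by
  obtain ⟨f, hf, habf⟩ := (gluedEdge_iff wp).mp hab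
  have hfE := hs.isGraphPseudometric hf
  have ha : a ∈ Vtx f.1 := ⟨b, habf⟩
  have hb : b ∈ Vtx f.1 := ⟨a, hfE.symm habf⟩
  obtain ⟨Φ, hΦ, hΦf⟩ := hs.exists_isPotential_glued_eqOn hf (hfE.isPotential_hatd ha)
  refine hΦ.eq_hatd_of_edge (fun _ _ => hs.wd_nonneg) hab ?_
  rw [hΦf ha, hΦf hb, hatd_self hfE.nonneg, zero_add, hs.wd_eq hf habf, hfE.edge_eq habf]

theorem exists_mem_inter (hs : GluingSetup Ep wp F wd) (hx : x ∈ Vtx (gluedEdge Ep F)) :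
    ∃ f ∈ insert (Ep, wp) F, x ∈ Vtx f.1 ∧ (Vtx f.1 ∩ Vtx Ep).Nonempty := by
  obtain ⟨z, hxz | ⟨f, hf, hxz⟩⟩ := hx
  · exact ⟨(Ep, wp), Set.mem_insert _ _, ⟨z, hxz⟩, x, ⟨z, hxz⟩, z, hxz⟩
  · exact ⟨f, Set.mem_insert_of_mem _ hf, ⟨z, hxz⟩, hs.meet f hf⟩

theorem joined_gluedEdge (hs : GluingSetup Ep wp F wd) (hx : x ∈ Vtx (gluedEdge Ep F))
    (hy : y ∈ Vtx (gluedEdge Ep F)) : Joined (gluedEdge Ep F) x y := by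
  obtain ⟨f, hf, hxf, x', hx'f, hx'⟩ := hs.exists_mem_inter hx
  obtain ⟨g, hg, hyg, y', hy'g, hy'⟩ := hs.exists_mem_inter hy
  have hxx' := ((hs.isGraphPseudometric hf).connected x hxf x' hx'f).mono (le_gluedEdge hf)
  have hx'y' := (hs.hp.connected x' hx' y' hy').mono (le_gluedEdge (Set.mem_insert (Ep, wp) F))
  have hy'y := ((hs.isGraphPseudometric hg).connected y' hy'g y hyg).mono (le_gluedEdge hg)
  exact (hxx'.trans hx'y').trans hy'y

end GluingSetup

/-- In the gluing setup, the glued function `d = p ∪ ⋃𝔉` is a graph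
pseudometric on `E_d`, i.e. `d(xy) = d̂(x,y)` for every edge `xy ∈ E_d`. -/
theorem gluing_graph_pseudometric (Ep : X → X → Prop) (wp : X → X → ℝ)
    (F : Set ((X → X → Prop) × (X → X → ℝ))) (wd : X → X → ℝ)
    (hs : GluingSetup Ep wp F wd) :
    IsGraphPseudometric (gluedEdge Ep F) wd := by
  refine ⟨fun a b hab => ?_, fun a haa => ?_, fun a b hab => ?_, fun a b => hs.wd_nonneg,
    fun x hx y hy => hs.joined_gluedEdge hx hy, fun a b => hs.wd_eq_hatd⟩
  · obtain ⟨f, hf, hab⟩ := (gluedEdge_iff wp).mp hab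
    exact le_gluedEdge hf _ _ ((hs.isGraphPseudometric hf).symm hab)
  · obtain ⟨f, hf, haa⟩ := (gluedEdge_iff wp).mp haa
    exact (hs.isGraphPseudometric hf).irrefl a haa
  · obtain ⟨f, hf, hab⟩ := (gluedEdge_iff wp).mp hab
    have hfE := hs.isGraphPseudometric hf
    rw [hs.wd_eq hf hab, hs.wd_eq hf (hfE.symm hab), hfE.wt_symm hab]

end GraphMetricPaper
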